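/- Let K ≥ 1 be an integer and let s ∈ ℂ with Re s > −K+1 and s ≠ 1. Then ζ(s) = 1/(s−1) + 1/2 + ∑_{k=2}^{K} C(s+k−2, k−1)·(B_k/k) − C(s+K−1, K) ∫_1^∞ B_K({t}) t^{−s−K} dt, where C(s+k−2, k−1) = (∏_{j=0}^{k−2}(s+j))/(k−1)! and C(s+K−1, K) = (∏_{j=0}^{K−1}(s+j))/K! denote generalized binomial coefficients. -/

import Mathlib

open MeasureTheory Polynomial

/-!
Let `I_k(s) = ∫_1^∞ B_k({t}) t^{-s-k} dt`. For `Re s > 1`, integration by parts on each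
`[n, n + 1]` (where `B_k` has antiderivative `B_{k+1} / (k + 1)`), summed over `n ≥ 1`,
expresses `I_k(s)` through `I_{k+1}(s)` and the boundary sum `ζ(s + k)`. Starting from
`I_0(s) = 1 / (s - 1)`, the first step gives the formula for `K = 1`. In every later step
`B_{k+1}(0) = B_{k+1}(1)`, the boundary sum telescopes, and the formula for `K` turns into the
one for `K + 1`. Since `I_K` is a Mellin transform of a bounded function supported away from
`0`, both sides without the pole are holomorphic on `Re s > 1 - K`, and the identity theorem
extends the formula there.
-/

open Set Filter Topology Asymptotics

section IntegralIoi

variable {E : Type*} [NormedAddCommGroup E]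

lemma tendsto_sum_integral_add_nat_integral_Ioi [NormedSpace ℝ E] {f : ℝ → E} {a : ℝ}
    (hf : IntegrableOn f (Ioi a)) :
    Tendsto (fun N : ℕ ↦ ∑ n ∈ Finset.range N, ∫ t in (a + n)..(a + n + 1), f t) atTop
      (𝓝 (∫ t in Ioi a, f t)) := by
  have hlim : Tendsto (fun N : ℕ ↦ a + N) atTop atTop :=
    tendsto_atTop_add_const_left _ _ tendsto_natCast_atTop_atTop
  refine (intervalIntegral_tendsto_integral_Ioi a hf hlim).congr fun N ↦ ?_
  have hint (n : ℕ) : IntervalIntegrable f volume (a + n) (a + (n + 1 : ℕ)) := by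
    rw [intervalIntegrable_iff_integrableOn_Ioc_of_le (by simp)]
    exact hf.mono_set fun t ht ↦ (le_add_of_nonneg_right n.cast_nonneg).trans_lt ht.1
  have hsum := intervalIntegral.sum_integral_adjacent_intervals (a := fun n : ℕ ↦ a + n) (n := N)
    fun n _ ↦ hint n
  simpa [add_assoc] using hsum.symm

lemma differentiableAt_integral_Ioi_cpow_smul [NormedSpace ℂ E] {f : ℝ → E} {a b : ℝ} {s : ℂ}
    (hb : 0 < b) (hf : LocallyIntegrableOn f (Ioi 0)) (hf_top : f =O[atTop] (· ^ (-a)))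
    (hs : s.re < a) :
    DifferentiableAt ℂ (fun z ↦ ∫ t in Ioi b, (t : ℂ) ^ (z - 1) • f t) s := by
  have hmellin : (fun z ↦ ∫ t in Ioi b, (t : ℂ) ^ (z - 1) • f t) =
      mellin ((Ioi b).indicator f) := by
    funext z
    simp_rw [mellin, ← indicator_smul_apply (Ioi b) (fun t : ℝ ↦ (t : ℂ) ^ (z - 1)) f]
    rw [setIntegral_indicator measurableSet_Ioi, Ioi_inter_Ioi, max_eq_right hb.le]
  have hloc : LocallyIntegrableOn ((Ioi b).indicator f) (Ioi 0) := fun x hx ↦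
    let ⟨U, hU, hfU⟩ := hf x hx
    ⟨U, hU, hfU.indicator measurableSet_Ioi⟩
  have htop : (Ioi b).indicator f =O[atTop] (· ^ (-a)) :=
    hf_top.congr' ((eventually_gt_atTop b).mono fun t ht ↦ (indicator_of_mem ht f).symm) .rfl
  have hbot : (Ioi b).indicator f =O[𝓝[>] 0] (· ^ (-(s.re - 1))) := by
    have hzero : (Ioi b).indicator f =ᶠ[𝓝[>] 0] 0 := by
      filter_upwards [nhdsWithin_le_nhds (Iio_mem_nhds hb)] with t ht
      exact indicator_of_notMem (notMem_Ioi.mpr (le_of_lt ht)) f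
    exact hzero.trans_isBigO (isBigO_zero _ _)
  rw [hmellin]
  exact mellin_differentiableAt_of_isBigO_rpow hloc htop hs hbot (sub_one_lt _)

end IntegralIoi

section BernoulliFract

variable (k : ℕ)

lemma measurable_bernoulliFun_fract : Measurable fun t : ℝ ↦ bernoulliFun k (Int.fract t) :=
  (continuous_bernoulliFun k).measurable.comp measurable_fract

lemma exists_norm_bernoulliFun_fract_le : ∃ C, ∀ t : ℝ, ‖bernoulliFun k (Int.fract t)‖ ≤ C := by
  obtain ⟨C, hC⟩ := isCompact_Icc.exists_bound_of_continuousOn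
    (continuous_bernoulliFun k).continuousOn
  exact ⟨C, fun t ↦ hC _ ⟨Int.fract_nonneg t, (Int.fract_lt_one t).le⟩⟩

variable {E : Type*} [NormedAddCommGroup E] [NormedSpace ℝ E] {f f' : ℝ → E}

lemma integrable_bernoulliFun_fract_smul {μ : Measure ℝ} (hf : Integrable f μ) :
    Integrable (fun t ↦ bernoulliFun k (Int.fract t) • f t) μ := by
  obtain ⟨C, hC⟩ := exists_norm_bernoulliFun_fract_le k
  exact hf.bdd_smul C (measurable_bernoulliFun_fract k).aestronglyMeasurable (ae_of_all _ hC)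

lemma intervalIntegral_bernoulliFun_fract_smul (m : ℤ) :
    ∫ t in (m : ℝ)..(m + 1), bernoulliFun k (Int.fract t) • f t =
      ∫ t in (m : ℝ)..(m + 1), bernoulliFun k (t - m) • f t := by
  refine intervalIntegral.integral_congr_Ioo_of_le (by linarith) fun t ht ↦ ?_
  have hfract : Int.fract t = t - m :=
    Int.fract_eq_iff.mpr ⟨by linarith [ht.1], by linarith [ht.2], m, by ring⟩
  simp only [hfract]

variable [CompleteSpace E]

lemma intervalIntegral_bernoulliFun_fract_smul_eq_deriv (m : ℤ)
    (hf : ∀ t ∈ Icc (m : ℝ) (m + 1), HasDerivAt f (f' t) t)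
    (hf' : IntervalIntegrable f' volume m (m + 1)) :
    ∫ t in (m : ℝ)..(m + 1), bernoulliFun k (Int.fract t) • f t =
      (k + 1 : ℝ)⁻¹ • (bernoulliFun (k + 1) 1 • f (m + 1) - bernoulliFun (k + 1) 0 • f m
        - ∫ t in (m : ℝ)..(m + 1), bernoulliFun (k + 1) (Int.fract t) • f' t) := by
  have hB (t : ℝ) : HasDerivAt (fun t ↦ bernoulliFun (k + 1) (t - m) / (k + 1))
      (bernoulliFun k (t - m)) t :=
    (antideriv_bernoulliFun k (t - m)).comp_sub_const t m
  have hB' : IntervalIntegrable (fun t ↦ bernoulliFun k (t - m)) volume m (m + 1) :=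
    ((continuous_bernoulliFun k).comp (continuous_sub_right _)).intervalIntegrable _ _
  have parts := intervalIntegral.integral_smul_deriv_eq_deriv_smul (v := f) (v' := f')
    (fun t _ ↦ hB t) (fun t ht ↦ hf t (by rwa [uIcc_of_le (by linarith)] at ht)) hB' hf'
  simp only [div_eq_inv_mul, mul_smul, intervalIntegral.integral_smul, add_sub_cancel_left,
    sub_self] at parts
  rw [intervalIntegral_bernoulliFun_fract_smul, intervalIntegral_bernoulliFun_fract_smul,
    smul_sub, smul_sub, parts, sub_sub_cancel]

lemma integral_Ioi_bernoulliFun_fract_smul_eq_deriv (m : ℤ)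
    (hf : ∀ t ∈ Ici (m : ℝ), HasDerivAt f (f' t) t) (hfi : IntegrableOn f (Ioi (m : ℝ)))
    (hfi' : IntegrableOn f' (Ioi (m : ℝ))) {S : E} (hS : HasSum (fun n : ℕ ↦ f (m + n)) S) :
    ∫ t in Ioi (m : ℝ), bernoulliFun k (Int.fract t) • f t =
      (k + 1 : ℝ)⁻¹ • (bernoulliFun (k + 1) 1 • (S - f m) - bernoulliFun (k + 1) 0 • S
        - ∫ t in Ioi (m : ℝ), bernoulliFun (k + 1) (Int.fract t) • f' t) := by
  have hS_tail : HasSum (fun n : ℕ ↦ f (m + n + 1)) (S - f m) := by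
    simpa [add_assoc] using (hasSum_nat_add_iff' 1).mpr hS
  have hlim := ((((hS_tail.const_smul (bernoulliFun (k + 1) 1)).sub
    (hS.const_smul (bernoulliFun (k + 1) 0))).tendsto_sum_nat).sub
    (tendsto_sum_integral_add_nat_integral_Ioi
      (integrable_bernoulliFun_fract_smul (k + 1) hfi'))).const_smul (k + 1 : ℝ)⁻¹
  refine tendsto_nhds_unique (tendsto_sum_integral_add_nat_integral_Ioi
    (integrable_bernoulliFun_fract_smul k hfi)) (hlim.congr fun N ↦ ?_)
  rw [← Finset.sum_sub_distrib, Finset.smul_sum]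
  refine Finset.sum_congr rfl fun n _ ↦ ?_
  have hn : (m : ℝ) ≤ m + n := le_add_of_nonneg_right n.cast_nonneg
  have hint : IntervalIntegrable f' volume (m + n) (m + n + 1) := by
    rw [intervalIntegrable_iff_integrableOn_Ioc_of_le (by linarith)]
    exact hfi'.mono_set fun t ht ↦ hn.trans_lt ht.1
  have hstep := intervalIntegral_bernoulliFun_fract_smul_eq_deriv k (m + n) (f := f) (f' := f')
  push_cast at hstep
  exact (hstep (fun t ht ↦ hf t (hn.trans ht.1)) hint).symm

end BernoulliFract

/-- The integral `∫_1^∞ B_k({t}) t^{-s-k} dt` in the remainder term of the Euler–Maclaurin expansion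
of `ζ(s)`, with the junk value `0` where it diverges. -/
noncomputable def bernoulliTail (k : ℕ) (s : ℂ) : ℂ :=
  ∫ t in Ioi (1 : ℝ), bernoulliFun k (Int.fract t) • (t : ℂ) ^ (-s - k)

lemma bernoulliTail_zero {s : ℂ} (hs : 1 < s.re) : bernoulliTail 0 s = 1 / (s - 1) := by
  have h := integral_Ioi_cpow_of_lt (a := -s) (by simpa using hs) zero_lt_one
  simp only [bernoulliTail, bernoulliFun_zero, one_smul, Nat.cast_zero, sub_zero, h,
    Complex.ofReal_one, Complex.one_cpow]
  rw [neg_div, ← div_neg, neg_add, neg_neg, sub_eq_add_neg]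

lemma hasSum_one_add_nat_cpow_neg {s : ℂ} (hs : 1 < s.re) :
    HasSum (fun n : ℕ ↦ (1 + n : ℂ) ^ (-s)) (riemannZeta s) := by
  have hsum := (summable_nat_add_iff 1).mpr (Complex.summable_one_div_nat_cpow.mpr hs)
  rw [zeta_eq_tsum_one_div_nat_add_one_cpow hs]
  simpa [Complex.cpow_neg, add_comm] using hsum.hasSum

lemma bernoulliTail_eq_succ (k : ℕ) {s : ℂ} (hs : 1 < s.re) :
    bernoulliTail k s =
      (bernoulliFun (k + 1) 1 * (riemannZeta (s + k) - 1)
        - bernoulliFun (k + 1) 0 * riemannZeta (s + k)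
        + (s + k) * bernoulliTail (k + 1) s) / (k + 1) := by
  have hre (j : ℕ) : 1 < (s + j).re := by
    rw [Complex.add_re, Complex.natCast_re]
    exact lt_add_of_lt_of_nonneg hs j.cast_nonneg
  have hsk_ne : -s - k ≠ 0 := by
    rw [← neg_add', neg_ne_zero]
    exact Complex.ne_zero_of_one_lt_re (hre k)
  have hderiv (t : ℝ) (ht : t ∈ Ici ((1 : ℤ) : ℝ)) :
      HasDerivAt (fun t : ℝ ↦ (t : ℂ) ^ (-s - k))
        ((-s - k) * (t : ℂ) ^ (-s - (k + 1 : ℕ))) t := by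
    have ht_ne : t ≠ 0 := (zero_lt_one.trans_le (by simpa using ht)).ne'
    simpa only [Nat.cast_succ, sub_sub] using hasDerivAt_ofReal_cpow_const ht_ne hsk_ne
  have hint (j : ℕ) : IntegrableOn (fun t : ℝ ↦ (t : ℂ) ^ (-s - j)) (Ioi ((1 : ℤ) : ℝ)) :=
    integrableOn_Ioi_cpow_of_lt
      (by rw [← neg_add', Complex.neg_re]; exact neg_lt_neg (hre j)) (by simp)
  have hzeta : HasSum (fun n : ℕ ↦ (((1 : ℤ) + n : ℝ) : ℂ) ^ (-s - k)) (riemannZeta (s + k)) := by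
    simpa only [neg_add', Int.cast_one, Complex.ofReal_add, Complex.ofReal_one,
      Complex.ofReal_natCast] using hasSum_one_add_nat_cpow_neg (hre k)
  have hparts := integral_Ioi_bernoulliFun_fract_smul_eq_deriv k 1 hderiv (hint k)
    ((hint (k + 1)).const_mul _) hzeta
  simp only [← mul_smul_comm, integral_const_mul, Int.cast_one, Complex.ofReal_one,
    Complex.one_cpow] at hparts
  rw [bernoulliTail, bernoulliTail, hparts]
  simp only [Complex.real_smul]
  push_cast
  ring

lemma differentiableAt_bernoulliTail {K : ℕ} {s : ℂ} (hs : -(K : ℝ) + 1 < s.re) :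
    DifferentiableAt ℂ (bernoulliTail K) s := by
  obtain ⟨C, hC⟩ := exists_norm_bernoulliFun_fract_le K
  have hbound (t : ℝ) : ‖(bernoulliFun K (Int.fract t) : ℂ)‖ ≤ C := by
    simpa only [Complex.norm_real] using hC t
  have hloc : LocallyIntegrable (fun t : ℝ ↦ (bernoulliFun K (Int.fract t) : ℂ)) :=
    (locallyIntegrable_const C).mono
      (measurable_bernoulliFun_fract K).complex_ofReal.aestronglyMeasurable
      (ae_of_all _ fun t ↦ (hbound t).trans (le_abs_self C))
  have hbdd : (fun t : ℝ ↦ (bernoulliFun K (Int.fract t) : ℂ)) =O[atTop] (· ^ (-0 : ℝ)) :=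
    .of_bound C (.of_forall fun t ↦ by simpa using hbound t)
  have htail : bernoulliTail K = (fun z : ℂ ↦
      ∫ t in Ioi (1 : ℝ), (t : ℂ) ^ (z - 1) • (bernoulliFun K (Int.fract t) : ℂ)) ∘
        fun z ↦ 1 - z - K := by
    funext z
    simp only [bernoulliTail, Function.comp_apply, Complex.real_smul, smul_eq_mul, mul_comm,
      show 1 - z - K - 1 = -z - K by ring]
  rw [htail]
  exact (differentiableAt_integral_Ioi_cpow_smul zero_lt_one (hloc.locallyIntegrableOn _) hbdd
    (by simp only [Complex.sub_re, Complex.one_re, Complex.natCast_re]; linarith)).comp s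
      (by fun_prop)

/-- The right-hand side of the Euler–Maclaurin expansion of `ζ(s)` without its pole `1 / (s - 1)`;
it represents `riemannZeta₀` on `Re s > 1 - K`. -/
noncomputable def eulerMaclaurinZeta₀ (K : ℕ) (s : ℂ) : ℂ :=
  1 / 2
    + (∑ k ∈ Finset.Icc 2 K,
        ((∏ j ∈ Finset.range (k - 1), (s + j)) / (k - 1).factorial) * ((bernoulli k : ℚ) / k))
    - ((∏ j ∈ Finset.range K, (s + j)) / K.factorial) * bernoulliTail K s

lemma eulerMaclaurinZeta₀_one {s : ℂ} (hs : 1 < s.re) :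
    eulerMaclaurinZeta₀ 1 s = riemannZeta₀ s := by
  have hs1 : s ≠ 1 := by rintro rfl; simp at hs
  have hone : eulerMaclaurinZeta₀ 1 s = 1 / 2 - s * bernoulliTail 1 s := by
    simp [eulerMaclaurinZeta₀]
  have hrec : 1 / (s - 1) =
      1 / 2 * (riemannZeta s - 1) + 1 / 2 * riemannZeta s + s * bernoulliTail 1 s := by
    rw [← bernoulliTail_zero hs, bernoulliTail_eq_succ 0 hs]
    norm_num [bernoulliFun_one]
  rw [hone]
  linear_combination hrec + riemannZeta_eq_inv_sub_add hs1

lemma eulerMaclaurinZeta₀_succ {K : ℕ} (hK : 1 ≤ K) {s : ℂ} (hs : 1 < s.re) :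
    eulerMaclaurinZeta₀ (K + 1) s = eulerMaclaurinZeta₀ K s := by
  have hrec : bernoulliTail K s =
      ((s + K) * bernoulliTail (K + 1) s - (bernoulli (K + 1) : ℚ)) / (K + 1) := by
    rw [bernoulliTail_eq_succ K hs, bernoulliFun_endpoints_eq_of_ne_one (by lia),
      bernoulliFun_eval_zero, Complex.ofReal_ratCast]
    ring
  have hfact : (K.factorial : ℂ) ≠ 0 := mod_cast K.factorial_ne_zero
  have hK1 : (K + 1 : ℂ) ≠ 0 := Nat.cast_add_one_ne_zero K
  rw [eulerMaclaurinZeta₀, eulerMaclaurinZeta₀, Finset.sum_Icc_succ_top (by lia),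
    Finset.prod_range_succ, Nat.factorial_succ, Nat.add_sub_cancel, hrec]
  push_cast
  field_simp
  ring

lemma eulerMaclaurinZeta₀_eq_riemannZeta₀_of_one_lt_re {K : ℕ} (hK : 1 ≤ K) {s : ℂ}
    (hs : 1 < s.re) : eulerMaclaurinZeta₀ K s = riemannZeta₀ s := by
  induction K, hK using Nat.le_induction with
  | base => exact eulerMaclaurinZeta₀_one hs
  | succ K hK ih => rw [eulerMaclaurinZeta₀_succ hK hs, ih]

lemma differentiableOn_eulerMaclaurinZeta₀ (K : ℕ) :
    DifferentiableOn ℂ (eulerMaclaurinZeta₀ K) {s | -(K : ℝ) + 1 < s.re} := by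
  intro s hs
  have htail := differentiableAt_bernoulliTail hs
  refine DifferentiableAt.differentiableWithinAt ?_
  unfold eulerMaclaurinZeta₀
  fun_prop

lemma eulerMaclaurinZeta₀_eq_riemannZeta₀ {K : ℕ} (hK : 1 ≤ K) {s : ℂ}
    (hs : -(K : ℝ) + 1 < s.re) : eulerMaclaurinZeta₀ K s = riemannZeta₀ s := by
  have hopen : IsOpen {z : ℂ | -(K : ℝ) + 1 < z.re} := isOpen_lt (by fun_prop) (by fun_prop)
  have hopen_one : IsOpen {z : ℂ | 1 < z.re} := isOpen_lt (by fun_prop) (by fun_prop)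
  have hnear : eulerMaclaurinZeta₀ K =ᶠ[𝓝 2] riemannZeta₀ := by
    filter_upwards [hopen_one.mem_nhds (by simp : (2 : ℂ) ∈ _)] with z hz
    exact eulerMaclaurinZeta₀_eq_riemannZeta₀_of_one_lt_re hK hz
  have htwo : (2 : ℂ) ∈ {z : ℂ | -(K : ℝ) + 1 < z.re} := by
    simpa using by linarith [K.cast_nonneg (α := ℝ)]
  exact ((differentiableOn_eulerMaclaurinZeta₀ K).analyticOnNhd hopen)
    |>.eqOn_of_preconnected_of_eventuallyEq
      (differentiable_riemannZeta₀.differentiableOn.analyticOnNhd hopen)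
      (convex_halfSpace_re_gt _).isPreconnected htwo hnear hs

/-- Euler–Maclaurin expansion of the Riemann zeta function: for `K ≥ 1` and
`Re s > −K+1`, `s ≠ 1`,
`ζ(s) = 1/(s−1) + 1/2 + ∑_{k=2}^K C(s+k−2,k−1)·B_k/k
  − C(s+K−1,K) ∫_1^∞ B_K({t}) t^{−s−K} dt`,
where `C(s+k−2,k−1) = (∏_{j=0}^{k−2} (s+j))/(k−1)!`. -/
theorem zeta_euler_maclaurin (K : ℕ) (hK : 1 ≤ K) (s : ℂ)
    (hs : -(K:ℝ) + 1 < s.re) (hs1 : s ≠ 1) :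
    riemannZeta s =
      1/(s-1) + 1/2
      + (∑ k ∈ Finset.Icc 2 K,
          ((∏ j ∈ Finset.range (k-1), (s + (j:ℂ))) / (Nat.factorial (k-1)))
            * (((bernoulli k : ℚ) : ℂ) / (k:ℂ)))
      - ((∏ j ∈ Finset.range K, (s + (j:ℂ))) / (Nat.factorial K))
          * ∫ t in Set.Ioi (1:ℝ),
              ((Polynomial.aeval (Int.fract t) (Polynomial.bernoulli K) : ℝ) : ℂ)
                * (t:ℂ) ^ (-s - (K:ℂ)) := by
  have htail : bernoulliTail K s = ∫ t in Set.Ioi (1:ℝ),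
      ((Polynomial.aeval (Int.fract t) (Polynomial.bernoulli K) : ℝ) : ℂ)
        * (t:ℂ) ^ (-s - (K:ℂ)) := by
    simp only [bernoulliTail, bernoulliFun, Polynomial.eval_map_algebraMap, Complex.real_smul]
  rw [riemannZeta_eq_inv_sub_add hs1, ← eulerMaclaurinZeta₀_eq_riemannZeta₀ hK hs,
    eulerMaclaurinZeta₀, htail]
  ring
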